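/- arXiv:1503.00989 — 5 statements merged into one kernel-verified Lean document; each statement's English description precedes it below -/
import Mathlib

section
/- The category Enc of enclosures admits fiber products: for any pair of morphisms f₁ : E₁ → E and f₂ : E₂ → E in Enc, a pullback of f₁ and f₂ exists in Enc. -/
open scoped BigOperators

/-- The standard Cartan plane of type A₂: `{x ∈ ℝ³ : x₁ + x₂ + x₃ = 0}`. -/
abbrev Cartan : Type := {x : Fin 3 → ℝ // ∑ i, x i = 0}

/-- The root half-space `{x : xᵢ − xⱼ ≥ c}`. -/
def RootHalfSpace (i j : Fin 3) (c : ℝ) : Set Cartan := {x | c ≤ x.1 i - x.1 j}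

/-- The root hyperplane `{x : xᵢ − xⱼ = c}`. -/
def RootHyperplane (i j : Fin 3) (c : ℝ) : Set Cartan := {x | x.1 i - x.1 j = c}

/-- An enclosure: a bounded subset of the Cartan plane which is an intersection of
finitely many root half-spaces. -/
def IsEnclosure (E : Set Cartan) : Prop :=
  Bornology.IsBounded E ∧
  ∃ s : Finset (Fin 3 × Fin 3 × ℝ),
    (∀ p ∈ s, p.1 ≠ p.2.1) ∧
    E = ⋂ p ∈ s, RootHalfSpace p.1 p.2.1 p.2.2

/-- An element of the affine Weyl group: `x ↦ σ·x + v` with `σ ∈ S₃` permuting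
coordinates and `v` in the Cartan plane. -/
def IsAffWeyl (g : Cartan → Cartan) : Prop :=
  ∃ (σ : Equiv.Perm (Fin 3)) (v : Cartan),
    ∀ (x : Cartan) (i : Fin 3), (g x).1 i = x.1 (σ i) + v.1 i

theorem isAffWeyl_id : IsAffWeyl (fun x => x) := by
  refine ⟨Equiv.refl _, ⟨fun _ => 0, by simp⟩, ?_⟩
  intro x i
  simp

theorem IsAffWeyl.comp {g₂ g₁ : Cartan → Cartan} (h₂ : IsAffWeyl g₂) (h₁ : IsAffWeyl g₁) :
    IsAffWeyl (fun x => g₂ (g₁ x)) := by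
  obtain ⟨σ₂, v₂, hh₂⟩ := h₂
  obtain ⟨σ₁, v₁, hh₁⟩ := h₁
  refine ⟨σ₂.trans σ₁, ⟨fun i => v₁.1 (σ₂ i) + v₂.1 i, ?_⟩, ?_⟩
  · rw [Finset.sum_add_distrib, Equiv.sum_comp σ₂ v₁.1, v₁.2, v₂.2, add_zero]
  · intro x i
    rw [hh₂, hh₁]
    simp [Equiv.trans_apply]
    ring

open CategoryTheory

/-- The category `Enc` of enclosures. -/
structure Enc : Type where
  /-- the underlying subset of the Cartan plane -/
  carrier : Set Cartan
  isEnclosure : IsEnclosure carrier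

/-- Morphisms of enclosures are restrictions of affine Weyl group elements. -/
instance : Category Enc where
  Hom E F := {f : E.carrier → F.carrier //
    ∃ g : Cartan → Cartan, IsAffWeyl g ∧ ∀ x : E.carrier, (f x : Cartan) = g x}
  id E := ⟨fun x => x, ⟨fun y => y, isAffWeyl_id, fun _ => rfl⟩⟩
  comp {E F G} f g := ⟨fun x => g.1 (f.1 x), by
    obtain ⟨gf, hgf, hf⟩ := f.2
    obtain ⟨gg, hgg, hg⟩ := g.2
    exact ⟨fun x => gg (gf x), hgg.comp hgf, fun x => by rw [hg, hf]⟩⟩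

open CategoryTheory.Limits

theorem IsAffWeyl.exists_inv {g : Cartan → Cartan} (h : IsAffWeyl g) :
    ∃ k : Cartan → Cartan, IsAffWeyl k ∧ (∀ x, k (g x) = x) ∧ ∀ x, g (k x) = x := by
  obtain ⟨σ, v, hg⟩ := h
  have hv : ∑ i, -v.1 (σ.symm i) = 0 := by
    rw [Finset.sum_neg_distrib, Equiv.sum_comp σ.symm v.1, v.2, neg_zero]
  have hk : ∀ x : Cartan, ∑ i, (x.1 (σ.symm i) + -v.1 (σ.symm i)) = 0 := by
    intro x
    rw [Finset.sum_add_distrib, hv, Equiv.sum_comp σ.symm x.1, x.2, zero_add]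
  refine ⟨fun x => ⟨fun i => x.1 (σ.symm i) + -v.1 (σ.symm i), hk x⟩,
    ⟨σ.symm, ⟨fun i => -v.1 (σ.symm i), hv⟩, fun x i => rfl⟩, ?_, ?_⟩
  · intro x
    apply Subtype.ext
    funext i
    simp [hg]
  · intro x
    apply Subtype.ext
    funext i
    simp [hg]

theorem IsEnclosure.inter_preimage {A B : Set Cartan} (hA : IsEnclosure A) (hB : IsEnclosure B)
    {k : Cartan → Cartan} (hk : IsAffWeyl k) : IsEnclosure (A ∩ k ⁻¹' B) := by
  classical
  obtain ⟨bA, s, hs, eA⟩ := hA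
  obtain ⟨-, t, ht, eB⟩ := hB
  obtain ⟨σ, v, hk⟩ := hk
  refine ⟨bA.subset Set.inter_subset_left,
    s ∪ t.image (fun p => (σ p.1, σ p.2.1, p.2.2 - (v.1 p.1 - v.1 p.2.1))), ?_, ?_⟩
  · intro p hp
    rcases Finset.mem_union.1 hp with hp | hp
    · exact hs p hp
    · obtain ⟨q, hq, rfl⟩ := Finset.mem_image.1 hp
      exact fun h => ht q hq (σ.injective h)
  · have key : ∀ x : Cartan, ∀ q : Fin 3 × Fin 3 × ℝ,
        k x ∈ RootHalfSpace q.1 q.2.1 q.2.2 ↔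
          x ∈ RootHalfSpace (σ q.1) (σ q.2.1) (q.2.2 - (v.1 q.1 - v.1 q.2.1)) := by
      intro x q
      simp only [RootHalfSpace, Set.mem_setOf_eq, hk]
      constructor <;> intro h <;> linarith
    ext x
    rw [eA, eB]
    simp only [Set.mem_inter_iff, Set.mem_preimage, Set.mem_iInter]
    constructor
    · rintro ⟨h1, h2⟩ p hp
      rcases Finset.mem_union.1 hp with hp | hp
      · exact h1 p hp
      · obtain ⟨q, hq, rfl⟩ := Finset.mem_image.1 hp
        exact (key x q).1 (h2 q hq)
    · intro h
      exact ⟨fun p hp => h p (Finset.mem_union_left _ hp), fun q hq => (key x q).2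
        (h _ (Finset.mem_union_right _ (Finset.mem_image_of_mem _ hq)))⟩

theorem Enc.hom_ext' {A B : Enc} (f g : A ⟶ B) (h : ∀ x, f.1 x = g.1 x) : f = g :=
  Subtype.ext (funext h)

/-- The category `Enc` of enclosures admits fiber products: any pair of
morphisms `f₁ : E₁ → E`, `f₂ : E₂ → E` has a pullback in `Enc`. -/
theorem enc_hasPullback {E₁ E₂ E : Enc} (f₁ : E₁ ⟶ E) (f₂ : E₂ ⟶ E) :
    HasPullback f₁ f₂ := by
  obtain ⟨g₁, hg₁, e₁⟩ := f₁.2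
  obtain ⟨g₂, hg₂, e₂⟩ := f₂.2
  obtain ⟨k, hk, kg, gk⟩ := hg₂.exists_inv
  have hkg : IsAffWeyl (fun x => k (g₁ x)) := hk.comp hg₁
  let P : Enc := ⟨_, E₁.isEnclosure.inter_preimage E₂.isEnclosure hkg⟩
  let p₁ : P ⟶ E₁ := ⟨fun x => ⟨x.1, x.2.1⟩, fun x => x, isAffWeyl_id, fun _ => rfl⟩
  let p₂ : P ⟶ E₂ := ⟨fun x => ⟨k (g₁ x.1), x.2.2⟩, _, hkg, fun _ => rfl⟩
  have w : p₁ ≫ f₁ = p₂ ≫ f₂ := by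
    apply Enc.hom_ext'
    intro x
    apply Subtype.ext
    change (f₁.1 (p₁.1 x)).1 = (f₂.1 (p₂.1 x)).1
    rw [e₁, e₂]
    exact (gk _).symm
  have hw : ∀ {Q : Enc} (a : Q ⟶ E₁) (b : Q ⟶ E₂), a ≫ f₁ = b ≫ f₂ →
      ∀ x, k (g₁ (a.1 x).1) = (b.1 x).1 := by
    intro Q a b h x
    have h1 : (f₁.1 (a.1 x)).1 = (f₂.1 (b.1 x)).1 :=
      congrArg (fun m : Q ⟶ E => (m.1 x).1) h
    rw [e₁, e₂] at h1
    rw [h1, kg]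
  let l : ∀ s : PullbackCone f₁ f₂, s.pt ⟶ P := fun s =>
    ⟨fun x => ⟨(s.fst.1 x).1, (s.fst.1 x).2, by
      change k (g₁ (s.fst.1 x).1) ∈ E₂.carrier
      rw [hw s.fst s.snd s.condition x]
      exact (s.snd.1 x).2⟩, s.fst.2⟩
  refine HasLimit.mk ⟨PullbackCone.mk p₁ p₂ w, PullbackCone.IsLimit.mk w l ?_ ?_ ?_⟩
  · intro s
    rfl
  · intro s
    apply Enc.hom_ext'
    intro x
    exact Subtype.ext (hw s.fst s.snd s.condition x)
  · intro s m h1 _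
    apply Enc.hom_ext'
    intro x
    apply Subtype.ext
    exact congrArg (fun n : s.pt ⟶ E₁ => (n.1 x).1) h1
end

section
/- The category Enc of enclosures has no terminal object; moreover, there exist enclosures E₁ and E₂ whose binary product does not exist in Enc. -/
open scoped BigOperators

open CategoryTheory

open CategoryTheory.Limits

/-- Morphisms of `Enc` are injective. -/
theorem enc_hom_injective {E F : Enc} (f : E ⟶ F) : Function.Injective f.1 := by
  obtain ⟨g, ⟨σ, v, hg⟩, hf⟩ := f.2
  intro x y hxy
  have h : g x = g y := by rw [← hf, ← hf, hxy]
  apply Subtype.ext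
  apply Subtype.ext
  funext i
  have h1 := hg x (σ.symm i)
  have h2 := hg y (σ.symm i)
  rw [h, h2] at h1
  simpa using h1.symm

/-- Hence every morphism is a monomorphism. -/
theorem enc_mono {E F G : Enc} (f : F ⟶ G) (a b : E ⟶ F) (h : a ≫ f = b ≫ f) : a = b := by
  apply Subtype.ext
  funext x
  apply enc_hom_injective f
  exact congrFun (congrArg Subtype.val h) x

/-- A closed alcove of size `r`. -/
def alcoveSet (r : ℝ) : Set Cartan :=
  {x | 0 ≤ x.1 0 - x.1 1 ∧ 0 ≤ x.1 1 - x.1 2 ∧ -r ≤ x.1 2 - x.1 0}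

theorem alcoveSet_isEnclosure (r : ℝ) : IsEnclosure (alcoveSet r) := by
  classical
  constructor
  · rw [Metric.isBounded_iff]
    refine ⟨2 * |r|, fun x hx y hy => ?_⟩
    rw [Subtype.dist_eq, dist_pi_le_iff (by positivity)]
    intro i
    have sx := x.2
    have sy := y.2
    rw [Fin.sum_univ_three] at sx sy
    obtain ⟨h1, h2, h3⟩ := hx
    obtain ⟨k1, k2, k3⟩ := hy
    have := le_abs_self r
    rw [Real.dist_eq, abs_le]
    fin_cases i <;> constructor <;> simp <;> linarith
  · refine ⟨{(0, 1, 0), (1, 2, 0), (2, 0, -r)}, by simp, ?_⟩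
    ext x
    simp [alcoveSet, RootHalfSpace]

/-- The alcove as an object of `Enc`. -/
def alcove (r : ℝ) : Enc := ⟨alcoveSet r, alcoveSet_isEnclosure r⟩

/-- The map from the one-point alcove translating by `(t, 0, -t)`. -/
def alcovePoint (t : ℝ) (h0 : 0 ≤ t) (h1 : 2 * t ≤ 1) : alcove 0 ⟶ alcove 1 :=
  ⟨fun x => ⟨⟨fun i => x.1.1 i + ![t, 0, -t] i, by
      have := x.1.2
      rw [Fin.sum_univ_three] at this ⊢
      simp
      linarith⟩, by
      obtain ⟨x, a, b, c⟩ := x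
      refine ⟨?_, ?_, ?_⟩ <;> simp <;> linarith⟩,
    fun x => ⟨fun i => x.1 i + ![t, 0, -t] i, by
      have := x.2
      rw [Fin.sum_univ_three] at this ⊢
      simp
      linarith⟩,
    ⟨Equiv.refl _, ⟨![t, 0, -t], by simp [Fin.sum_univ_three]⟩, fun x i => rfl⟩,
    fun x => rfl⟩

theorem alcovePoint_ne :
    alcovePoint 0 (by norm_num) (by norm_num) ≠ alcovePoint (1/2) (by norm_num) (by norm_num) := by
  intro h
  have h' := congrFun (congrArg Subtype.val h)
    ⟨⟨fun _ => 0, by simp⟩, by refine ⟨?_, ?_, ?_⟩ <;> simp⟩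
  have h2 := congrFun (congrArg Subtype.val (congrArg Subtype.val h')) 0
  simp [alcovePoint] at h2

/-- The category `Enc` has no terminal object, and there exist enclosures
`E₁`, `E₂` whose binary product does not exist in `Enc`. -/
theorem enc_no_terminal_no_products :
    (¬ HasTerminal Enc) ∧ ∃ E₁ E₂ : Enc, ¬ HasBinaryProduct E₁ E₂ := by
  constructor
  · intro _
    exact alcovePoint_ne (enc_mono (terminal.from (alcove 1)) _ _ (Subsingleton.elim _ _))
  · refine ⟨alcove 1, alcove 1, fun _ => ?_⟩
    let a := alcovePoint 0 (by norm_num) (by norm_num)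
    let b := alcovePoint (1/2) (by norm_num) (by norm_num)
    have h : prod.lift a a = prod.lift a b :=
      enc_mono prod.fst _ _ (by rw [prod.lift_fst, prod.lift_fst])
    apply alcovePoint_ne
    change a = b
    rw [← prod.lift_snd a a, h, prod.lift_snd]
end

section
/- Every covering of an enclosure E can be refined by a standard covering: given a finite family of morphisms V_k → E in Enc whose images cover E, there exist finitely many ordered families of parallel root hyperplanes such that each nonempty piece U_J of the associated standard covering of E is contained in the image of some V_k. -/
open scoped BigOperators

open CategoryTheory

/-- The strips associated to an ordered family of parallel root hyperplanes
`x i - x j = c 0 < c 1 < ⋯ < c (k-1)`.  For `0 ≤ m ≤ 2k`, `Strip i j c m` is: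
the outer half-plane `{x i - x j ≤ c 0}` for `m = 0`; the hyperplane
`{x i - x j = c t}` for `m = 2t+1`; the closed region between consecutive
hyperplanes for even `0 < m < 2k`; and the outer half-plane `{x i - x j ≥ c (k-1)}`
for `m = 2k`. -/
def Strip (i j : Fin 3) {k : ℕ} (c : Fin k → ℝ) (m : ℕ) : Set Cartan :=
  {x | (∀ t : Fin k, m ≤ 2 * t.1 → x.1 i - x.1 j ≤ c t) ∧
       (∀ t : Fin k, 2 * t.1 + 2 ≤ m → c t ≤ x.1 i - x.1 j) ∧
       (∀ t : Fin k, m = 2 * t.1 + 1 → x.1 i - x.1 j = c t)}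

/-- An ordered family of `k ≥ 2` distinct parallel root hyperplanes
`{x : x i - x j = c t}`, listed in their linear order. -/
structure StripFamily where
  /-- first coordinate of the root direction -/
  i : Fin 3
  /-- second coordinate of the root direction -/
  j : Fin 3
  ne : i ≠ j
  /-- the number of hyperplanes -/
  k : ℕ
  two_le : 2 ≤ k
  /-- the constants defining the parallel hyperplanes -/
  c : Fin k → ℝ
  mono : StrictMono c

/-- The `m`-th strip of a strip family. -/
def StripFamily.strip (D : StripFamily) (m : ℕ) : Set Cartan := Strip D.i D.j D.c m

/-- The image of a morphism of enclosures is again cut out by root half-spaces. -/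
theorem image_eq_halfSpaces {V E : Enc} (f : V ⟶ E) :
    ∃ s : Finset (Fin 3 × Fin 3 × ℝ), (∀ p ∈ s, p.1 ≠ p.2.1) ∧
      ∀ x : Cartan, (∃ y : V.carrier, (f.1 y : Cartan) = x) ↔
        ∀ p ∈ s, p.2.2 ≤ x.1 p.1 - x.1 p.2.1 := by
  classical
  obtain ⟨g, ⟨σ, v, hg⟩, hf⟩ := f.2
  obtain ⟨-, s, hs, hV⟩ := V.isEnclosure
  have memV : ∀ y : Cartan, y ∈ V.carrier ↔ ∀ p ∈ s, p.2.2 ≤ y.1 p.1 - y.1 p.2.1 := by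
    intro y
    rw [hV]
    simp only [Set.mem_iInter, RootHalfSpace, Set.mem_setOf_eq]
  refine ⟨s.image (fun p => (σ.symm p.1, σ.symm p.2.1,
    p.2.2 + v.1 (σ.symm p.1) - v.1 (σ.symm p.2.1))), ?_, ?_⟩
  · intro p hp
    obtain ⟨q, hq, rfl⟩ := Finset.mem_image.1 hp
    exact fun h => hs q hq (σ.symm.injective h)
  · intro x
    constructor
    · rintro ⟨y, rfl⟩ p hp
      obtain ⟨q, hq, rfl⟩ := Finset.mem_image.1 hp
      have h := (memV y).1 y.2 q hq
      simp only [hf, hg, Equiv.apply_symm_apply]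
      linarith
    · intro h
      have hsum : ∑ i, (x.1 (σ.symm i) - v.1 (σ.symm i)) = 0 := by
        rw [Finset.sum_sub_distrib, Equiv.sum_comp σ.symm x.1, Equiv.sum_comp σ.symm v.1,
          x.2, v.2, sub_zero]
      let y : Cartan := ⟨fun i => x.1 (σ.symm i) - v.1 (σ.symm i), hsum⟩
      have hy : y ∈ V.carrier := by
        rw [memV]
        intro q hq
        have := h _ (Finset.mem_image_of_mem _ hq)
        simp only at this
        simp only [y]
        linarith
      refine ⟨⟨y, hy⟩, ?_⟩
      rw [hf]
      apply Subtype.ext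
      funext i
      rw [hg]
      simp [y]

/-- The midpoint of two points of the Cartan plane. -/
noncomputable def cartanMid (x y : Cartan) : Cartan :=
  ⟨fun i => (x.1 i + y.1 i) / 2, by
    rw [← Finset.sum_div, Finset.sum_add_distrib, x.2, y.2]; simp⟩

/-- A generic point of a midpoint-convex set lying on one side of finitely many hyperplanes. -/
theorem exists_generic (U : Set Cartan) (hne : U.Nonempty)
    (hmid : ∀ x ∈ U, ∀ y ∈ U, cartanMid x y ∈ U) (T : Finset (Fin 3 × Fin 3 × ℝ))
    (hT : ∀ p ∈ T, (∀ x ∈ U, p.2.2 ≤ x.1 p.1 - x.1 p.2.1) ∨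
      (∀ x ∈ U, x.1 p.1 - x.1 p.2.1 ≤ p.2.2)) :
    ∃ x ∈ U, ∀ p ∈ T, x.1 p.1 - x.1 p.2.1 = p.2.2 →
      ∀ y ∈ U, y.1 p.1 - y.1 p.2.1 = p.2.2 := by
  classical
  induction T using Finset.induction_on with
  | empty =>
    obtain ⟨x, hx⟩ := hne
    exact ⟨x, hx, by simp⟩
  | insert q T hq ih =>
    obtain ⟨x, hx, h⟩ := ih (fun p hp => hT p (Finset.mem_insert_of_mem hp))
    by_cases hy : ∀ y ∈ U, y.1 q.1 - y.1 q.2.1 = q.2.2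
    · refine ⟨x, hx, fun p hp => ?_⟩
      rcases Finset.mem_insert.1 hp with rfl | hp
      · exact fun _ => hy
      · exact h p hp
    · push Not at hy
      obtain ⟨y, hyU, hy⟩ := hy
      have key : ∀ p ∈ insert q T,
          (cartanMid x y).1 p.1 - (cartanMid x y).1 p.2.1 = p.2.2 →
          x.1 p.1 - x.1 p.2.1 = p.2.2 ∧ y.1 p.1 - y.1 p.2.1 = p.2.2 := by
        intro p hp he
        simp only [cartanMid] at he
        rcases hT p hp with h1 | h1
        · have hx1 := h1 x hx
          have hy1 := h1 y hyU
          constructor <;> linarith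
        · have hx1 := h1 x hx
          have hy1 := h1 y hyU
          constructor <;> linarith
      refine ⟨cartanMid x y, hmid x hx y hyU, fun p hp he => ?_⟩
      have hk := key p hp he
      rcases Finset.mem_insert.1 hp with rfl | hp
      · exact absurd hk.2 hy
      · exact h p hp hk.1

/-- Strips are midpoint-convex. -/
theorem strip_mid (D : StripFamily) (m : ℕ) (x y : Cartan) (hx : x ∈ D.strip m)
    (hy : y ∈ D.strip m) : cartanMid x y ∈ D.strip m := by
  obtain ⟨a1, a2, a3⟩ := hx
  obtain ⟨b1, b2, b3⟩ := hy
  refine ⟨fun t ht => ?_, fun t ht => ?_, fun t ht => ?_⟩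
  · have := a1 t ht; have := b1 t ht; simp only [cartanMid]; linarith
  · have := a2 t ht; have := b2 t ht; simp only [cartanMid]; linarith
  · have := a3 t ht; have := b3 t ht; simp only [cartanMid]; linarith

/-- Enclosures are midpoint-convex. -/
theorem enc_mid (E : Enc) (x y : Cartan) (hx : x ∈ E.carrier) (hy : y ∈ E.carrier) :
    cartanMid x y ∈ E.carrier := by
  obtain ⟨-, s, -, hE⟩ := E.isEnclosure
  rw [hE] at hx hy ⊢
  simp only [Set.mem_iInter, RootHalfSpace, Set.mem_setOf_eq] at hx hy ⊢
  intro p hp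
  have := hx p hp; have := hy p hp; simp only [cartanMid]; linarith

/-- The two-hyperplane family `xᵢ - xⱼ = c, c + 1`. -/
noncomputable def pairFamily (p : Fin 3 × Fin 3 × ℝ) (h : p.1 ≠ p.2.1) : StripFamily where
  i := p.1
  j := p.2.1
  ne := h
  k := 2
  two_le := le_rfl
  c := fun t => p.2.2 + (t.1 : ℝ)
  mono := by
    intro s t hst
    have : (s.1 : ℝ) < t.1 := by exact_mod_cast hst
    simpa using this

/-- Each strip of `pairFamily p` is on one side of the hyperplane of `p`. -/
theorem pairFamily_side (p : Fin 3 × Fin 3 × ℝ) (h : p.1 ≠ p.2.1) (m : ℕ) :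
    (∀ x ∈ (pairFamily p h).strip m, p.2.2 ≤ x.1 p.1 - x.1 p.2.1) ∨
      (∀ x ∈ (pairFamily p h).strip m, x.1 p.1 - x.1 p.2.1 ≤ p.2.2) := by
  rcases Nat.lt_or_ge m 2 with hm | hm
  · right
    rintro x ⟨h1, h2, h3⟩
    have h1' := h1 (0 : Fin 2)
    have h3' := h3 (0 : Fin 2)
    simp [pairFamily] at h1' h3'
    interval_cases m
    · simpa using h1' rfl
    · exact le_of_eq (by simpa using h3' rfl)
  · left
    rintro x ⟨h1, h2, h3⟩
    have h2' := h2 (0 : Fin 2)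
    simp [pairFamily] at h2'
    have := h2' hm
    linarith

/-- Every covering of an enclosure `E` can be refined by a standard
covering: given a finite family of morphisms `V_k → E` in `Enc` whose images cover `E`,
there are finitely many ordered families of parallel root hyperplanes such that each
nonempty piece `U_J = E ∩ ⋂ strips` of the associated standard covering of `E` is
contained in the image of some `V_k`. -/
theorem covering_refined_by_standard (E : Enc) (n : ℕ) (Vk : Fin n → Enc)
    (f : ∀ m, Vk m ⟶ E)
    (hcov : ∀ x : E.carrier, ∃ (m : Fin n) (y : (Vk m).carrier), (f m).1 y = x) :
    ∃ (a : ℕ) (D : Fin a → StripFamily),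
      ∀ J : Fin a → ℕ, (∀ l, J l ≤ 2 * (D l).k) →
        (E.carrier ∩ ⋂ l, (D l).strip (J l)).Nonempty →
        ∃ m : Fin n,
          (E.carrier ∩ ⋂ l, (D l).strip (J l)) ⊆
            {x : Cartan | ∃ y : (Vk m).carrier, ((f m).1 y : Cartan) = x} := by
  classical
  choose s hs himg using fun m => image_eq_halfSpaces (f m)
  let T : Finset (Fin 3 × Fin 3 × ℝ) := Finset.univ.biUnion s
  have hTne : ∀ p ∈ T, p.1 ≠ p.2.1 := by
    intro p hp
    obtain ⟨m, -, hm⟩ := Finset.mem_biUnion.1 hp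
    exact hs m p hm
  let e := T.equivFin
  refine ⟨T.card, fun l => pairFamily (e.symm l).1 (hTne _ (e.symm l).2), ?_⟩
  intro J _ hne
  have hside : ∀ p ∈ T,
      (∀ x ∈ E.carrier ∩ ⋂ l, (pairFamily (e.symm l).1 (hTne _ (e.symm l).2)).strip (J l),
        p.2.2 ≤ x.1 p.1 - x.1 p.2.1) ∨
      (∀ x ∈ E.carrier ∩ ⋂ l, (pairFamily (e.symm l).1 (hTne _ (e.symm l).2)).strip (J l),
        x.1 p.1 - x.1 p.2.1 ≤ p.2.2) := by
    intro p hp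
    obtain ⟨l, hl⟩ := e.symm.surjective ⟨p, hp⟩
    have h := pairFamily_side (e.symm l).1 (hTne _ (e.symm l).2) (J l)
    have hp' : (e.symm l).1 = p := by rw [hl]
    rcases h with h | h
    · left
      intro x hx
      have := h x (Set.mem_iInter.1 hx.2 l)
      rwa [hp'] at this
    · right
      intro x hx
      have := h x (Set.mem_iInter.1 hx.2 l)
      rwa [hp'] at this
  obtain ⟨x, hx, hgen⟩ := exists_generic _ hne (by
    rintro x ⟨hx1, hx2⟩ y ⟨hy1, hy2⟩
    rw [Set.mem_iInter] at hx2 hy2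
    refine ⟨enc_mid E x y hx1 hy1, Set.mem_iInter.2 fun l => ?_⟩
    exact strip_mid _ _ x y (hx2 l) (hy2 l)) T hside
  obtain ⟨m, y, hy⟩ := hcov ⟨x, hx.1⟩
  have hxm := (himg m x).1 ⟨y, by rw [hy]⟩
  refine ⟨m, fun z hz => (himg m z).2 fun p hp => ?_⟩
  have hpT : p ∈ T := Finset.mem_biUnion.2 ⟨m, Finset.mem_univ _, hp⟩
  rcases hside p hpT with h | h
  · exact h z hz
  · exact (hgen p hpT (le_antisymm (h x hx) (hxm p hp)) z hz).ge
end

section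
/- Let E₁,…,E_n (n ≥ 1) be a nonempty finite collection of enclosures and let 𝔉 be a subsheaf of the product sheaf ∏ᵢ Ẽᵢ on the site Enc. Then 𝔉 is finitely related: for any two enclosures G and G′ and any maps of sheaves G̃ → 𝔉 and G̃′ → 𝔉, the fiber product sheaf G̃ ×_𝔉 G̃′ is finitely generated. -/
open scoped BigOperators

open CategoryTheory

/-- A sieve on an enclosure `E` contains a covering: a finite family of morphisms
`Eᵢ → E` in `Enc`, belonging to the sieve, whose images cover `E`. -/
def ContainsCovering (E : Enc) (S : CategoryTheory.Sieve E) : Prop :=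
  ∃ (n : ℕ) (F : Fin n → Enc) (f : ∀ i, F i ⟶ E),
    (∀ i, S.arrows (f i)) ∧ ∀ x : E.carrier, ∃ (i : Fin n) (y : (F i).carrier), (f i).1 y = x

open CategoryTheory

/-- `Ẽ`: the sheafification of the representable presheaf `Hom_Enc(−, F)`. -/
noncomputable def tilde (J : GrothendieckTopology Enc) (F : Enc) : Sheaf J (Type) :=
  (presheafToSheaf J (Type)).obj (yoneda.obj F)

/-- A sheaf of sets on the site `Enc` is finitely generated if finitely many maps
from sheafified representables `Ẽᵢ` induce an epimorphism `⨿ᵢ Ẽᵢ → 𝔉`. -/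
noncomputable def FinGenerated (J : GrothendieckTopology Enc) (𝔉 : Sheaf J (Type)) : Prop :=
  ∃ (m : ℕ) (E : Fin m → Enc) (φ : ∀ i, tilde J (E i) ⟶ 𝔉),
    Epi (Limits.Sigma.desc φ)

/-- A sheaf `𝔉` on the site `Enc` is finitely related if for any two enclosures
`G`, `G'` and maps `G̃ → 𝔉 ← G̃'`, the fiber product `G̃ ×_𝔉 G̃'` is finitely
generated. -/
noncomputable def FinRelated (J : GrothendieckTopology Enc) (𝔉 : Sheaf J (Type)) : Prop :=
  ∀ (G G' : Enc) (α : tilde J G ⟶ 𝔉) (α' : tilde J G' ⟶ 𝔉),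
    FinGenerated J (Limits.pullback α α')

/-- A construction is a finitely related sheaf of sets on the site `Enc`. -/
noncomputable def IsConstruction (J : GrothendieckTopology Enc) (𝔉 : Sheaf J (Type)) : Prop :=
  FinRelated J 𝔉

namespace EncAux
open Limits Opposite

variable {C : Type} [SmallCategory C] (J : GrothendieckTopology C)

/-- The functor `E ↦ Ẽ`. -/
noncomputable abbrev T : C ⥤ Sheaf J (Type) := yoneda ⋙ presheafToSheaf J (Type)

/-- Maps out of `Ũ` are sections over `U`. -/
noncomputable def sec (U : C) (Z : Sheaf J (Type)) :
    ((T J).obj U ⟶ Z) ≃ Z.obj.obj (op U) :=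
  ((sheafificationAdjunction J (Type)).homEquiv (yoneda.obj U) Z).trans yonedaEquiv

lemma sec_comp {U : C} {Z Z' : Sheaf J (Type)} (s : (T J).obj U ⟶ Z) (u : Z ⟶ Z') :
    sec J U Z' (s ≫ u) = u.hom.app (op U) (sec J U Z s) := by
  simp only [sec, Equiv.trans_apply, Adjunction.homEquiv_naturality_right]
  rw [yonedaEquiv_comp]
  rfl

lemma sec_map {U V : C} {Z : Sheaf J (Type)} (f : V ⟶ U) (s : (T J).obj U ⟶ Z) :
    sec J V Z ((T J).map f ≫ s) = Z.obj.map f.op (sec J U Z s) := by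
  simp only [sec, Equiv.trans_apply, Functor.comp_map, Adjunction.homEquiv_naturality_left]
  rw [yonedaEquiv_naturality]

lemma sec_T {U V : C} (f : V ⟶ U) :
    sec J V _ ((T J).map f) = (toSheafify J (yoneda.obj U)).app (op V) f := by
  have := sec_map J f (𝟙 _)
  rw [Category.comp_id] at this
  rw [this]
  simp only [sec, Equiv.trans_apply, yonedaEquiv_apply]
  have h := NatTrans.naturality_apply (toSheafify J (yoneda.obj U)) f.op (𝟙 U)
  refine Eq.trans h.symm ?_
  simp

lemma local_ext {U : C} {Z : Sheaf J (Type)} {S : Sieve U} (hS : S ∈ J U)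
    {u v : (T J).obj U ⟶ Z}
    (h : ∀ ⦃V : C⦄ (f : V ⟶ U), S f → (T J).map f ≫ u = (T J).map f ≫ v) : u = v := by
  apply (sec J U Z).injective
  have hZ := ((isSheaf_iff_isSheaf_of_type J Z.obj).1 Z.property).isSeparated
  refine (hZ S hS).ext ?_
  intro V f hf
  rw [← sec_map, ← sec_map, h f hf]

lemma local_full {U G : C} (a : (T J).obj U ⟶ (T J).obj G) (R : Sieve G) (hR : R ∈ J G) :
    ∃ S ∈ J U, ∀ ⦃V : C⦄ (f : V ⟶ U), S f → ∃ g : V ⟶ G, R g ∧ (T J).map f ≫ a = (T J).map g := by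
  let S : Sieve U :=
    { arrows := fun V f => ∃ g : V ⟶ G, R g ∧ (T J).map f ≫ a = (T J).map g
      downward_closed := by
        rintro V W f ⟨g, hg, e⟩ h
        refine ⟨h ≫ g, R.downward_closed hg h, ?_⟩
        rw [Functor.map_comp, Functor.map_comp, Category.assoc, e] }
  refine ⟨S, ?_, fun V f hf => hf⟩
  have h1 := Presheaf.imageSieve_mem J (toSheafify J (yoneda.obj G)) (sec J U _ a)
  refine J.transitive h1 S ?_
  rintro V f ⟨g, hg⟩
  have e : (T J).map f ≫ a = (T J).map g := by
    apply (sec J V _).injective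
    rw [sec_map, sec_T]
    exact hg.symm
  refine J.superset_covering ?_ (J.pullback_stable g hR)
  intro W h hh
  refine ⟨h ≫ g, hh, ?_⟩
  rw [Functor.map_comp, Functor.map_comp, Category.assoc, e]

lemma local_faithful {U G : C} {g g' : U ⟶ G} (h : (T J).map g = (T J).map g') :
    ∃ S ∈ J U, ∀ ⦃V : C⦄ (f : V ⟶ U), S f → f ≫ g = f ≫ g' := by
  have h2 : (toSheafify J (yoneda.obj G)).app (op U) g
      = (toSheafify J (yoneda.obj G)).app (op U) g' := by
    rw [← sec_T, ← sec_T, h]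
  exact ⟨Presheaf.equalizerSieve (F := yoneda.obj G) (X := op U) g g',
    Presheaf.equalizerSieve_mem J (toSheafify J (yoneda.obj G)) (X := op U) g g' h2,
    fun V f hf => hf⟩

lemma epi_of_local {I : Type} [HasColimitsOfShape (Discrete I) (Sheaf J Type)]
    {E : I → C} {Z : Sheaf J (Type)} (φ : ∀ i, (T J).obj (E i) ⟶ Z)
    (h : ∀ (U : C) (s : (T J).obj U ⟶ Z), ∃ S ∈ J U, ∀ ⦃V : C⦄ (f : V ⟶ U), S f →
      ∃ (i : I) (g : V ⟶ E i), (T J).map f ≫ s = (T J).map g ≫ φ i) :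
    Epi (Limits.Sigma.desc φ) := by
  constructor
  intro Y u v huv
  have hi : ∀ i, φ i ≫ u = φ i ≫ v := by
    intro i
    have := congrArg (fun t => Limits.Sigma.ι (fun i => (T J).obj (E i)) i ≫ t) huv
    simpa using this
  ext U x
  obtain ⟨U⟩ := U
  obtain ⟨s, rfl⟩ := (sec J U Z).surjective x
  obtain ⟨S, hS, hs⟩ := h U s
  have : s ≫ u = s ≫ v := by
    refine local_ext J hS ?_
    intro V f hf
    obtain ⟨i, g, e⟩ := hs f hf
    rw [← Category.assoc, e, ← Category.assoc, e, Category.assoc, hi, Category.assoc]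
  have := congrArg (sec J U Y) this
  rwa [sec_comp, sec_comp] at this

end EncAux

namespace EncAux
open Limits Opposite

/-- A finite intersection of root half-spaces. -/
def IsCell (E : Set Cartan) : Prop :=
  ∃ s : Finset (Fin 3 × Fin 3 × ℝ), (∀ p ∈ s, p.1 ≠ p.2.1) ∧
    E = ⋂ p ∈ s, RootHalfSpace p.1 p.2.1 p.2.2

lemma isCell_univ : IsCell Set.univ := ⟨∅, by simp, by simp⟩

lemma isCell_half {i j : Fin 3} (h : i ≠ j) (c : ℝ) : IsCell (RootHalfSpace i j c) :=
  ⟨{(i, j, c)}, by simpa using h, by simp⟩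

lemma IsCell.inter {A B : Set Cartan} (hA : IsCell A) (hB : IsCell B) : IsCell (A ∩ B) := by
  classical
  obtain ⟨s, hs, rfl⟩ := hA
  obtain ⟨t, ht, rfl⟩ := hB
  refine ⟨s ∪ t, ?_, ?_⟩
  · intro p hp
    rcases Finset.mem_union.1 hp with h | h
    · exact hs p h
    · exact ht p h
  · ext x
    simp only [Set.mem_inter_iff, Set.mem_iInter, Finset.mem_union]
    constructor
    · rintro ⟨h1, h2⟩ p (hp | hp)
      · exact h1 p hp
      · exact h2 p hp
    · intro h
      exact ⟨fun p hp => h p (Or.inl hp), fun p hp => h p (Or.inr hp)⟩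

lemma isCell_iInter {I : Type} (s : Finset I) (A : I → Set Cartan) (h : ∀ i, IsCell (A i)) :
    IsCell (⋂ i ∈ s, A i) := by
  classical
  induction s using Finset.induction_on with
  | empty => simpa using isCell_univ
  | insert a s ha ih =>
    rw [Finset.set_biInter_insert]
    exact (h a).inter ih

lemma isCell_forall {I : Type} [Fintype I] (A : I → Cartan → Prop)
    (h : ∀ i, IsCell {x | A i x}) : IsCell {x | ∀ i, A i x} := by
  have := isCell_iInter Finset.univ (fun i => {x | A i x}) h
  convert this using 1
  ext x
  simp

lemma isCell_empty : IsCell ∅ := by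
  have := (isCell_half (i := 0) (j := 1) (by decide) 1).inter
    (isCell_half (i := 1) (j := 0) (by decide) 1)
  convert this using 1
  ext x
  simp only [RootHalfSpace, Set.mem_empty_iff_false, Set.mem_inter_iff, Set.mem_ofPred_eq,
    false_iff, not_and, not_le]
  intro h
  linarith

lemma isCell_const (P : Prop) : IsCell {_x | P} := by
  by_cases h : P
  · simpa [h] using isCell_univ
  · simpa [h] using isCell_empty

/-- A condition `x i + a = x j + b` is a cell. -/
lemma isCell_coord (i j : Fin 3) (a b : ℝ) : IsCell {x | x.1 i + a = x.1 j + b} := by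
  by_cases h : i = j
  · subst h
    simpa using isCell_const (a = b)
  · have := (isCell_half h (b - a)).inter (isCell_half (Ne.symm h) (a - b))
    convert this using 1
    ext x
    simp only [RootHalfSpace, Set.mem_inter_iff, Set.mem_ofPred_eq]
    constructor
    · intro h
      constructor <;> linarith
    · rintro ⟨h1, h2⟩
      linarith

lemma isCell_eq {g h : Cartan → Cartan} (hg : IsAffWeyl g) (hh : IsAffWeyl h) :
    IsCell {x | g x = h x} := by
  obtain ⟨σ, v, hg⟩ := hg
  obtain ⟨τ, w, hh⟩ := hh
  have := isCell_forall (fun (i : Fin 3) (x : Cartan) => x.1 (σ i) + v.1 i = x.1 (τ i) + w.1 i)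
    (fun i => isCell_coord _ _ _ _)
  convert this using 3 with x
  rw [Subtype.ext_iff, funext_iff]
  simp only [hg, hh]

lemma IsCell.preimage {A : Set Cartan} (hA : IsCell A) {g : Cartan → Cartan}
    (hg : IsAffWeyl g) : IsCell (g ⁻¹' A) := by
  obtain ⟨s, hs, rfl⟩ := hA
  obtain ⟨σ, v, hg⟩ := hg
  have := isCell_iInter s.attach
    (fun p => RootHalfSpace (σ p.1.1) (σ p.1.2.1) (p.1.2.2 - v.1 p.1.1 + v.1 p.1.2.1))
    (fun p => isCell_half (fun e => hs p.1 p.2 (σ.injective e)) _)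
  convert this using 1
  ext x
  simp only [RootHalfSpace, Set.mem_preimage, Set.mem_iInter, Set.mem_ofPred_eq, hg,
    Finset.mem_attach, forall_true_left, Subtype.forall]
  refine forall₂_congr fun p hp => ?_
  constructor <;> intro h <;> linarith

lemma exists_inv {g : Cartan → Cartan} (hg : IsAffWeyl g) :
    ∃ h, IsAffWeyl h ∧ (∀ x, h (g x) = x) ∧ ∀ x, g (h x) = x := by
  obtain ⟨σ, v, hg⟩ := hg
  have hs : ∀ x : Cartan, ∑ i, (x.1 (σ.symm i) - v.1 (σ.symm i)) = 0 := by
    intro x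
    rw [Finset.sum_sub_distrib, Equiv.sum_comp σ.symm x.1, Equiv.sum_comp σ.symm v.1, x.2, v.2,
      sub_zero]
  have hv : ∑ i, - v.1 (σ.symm i) = 0 := by
    rw [Finset.sum_neg_distrib, Equiv.sum_comp σ.symm v.1, v.2, neg_zero]
  refine ⟨fun x => ⟨fun i => x.1 (σ.symm i) - v.1 (σ.symm i), hs x⟩,
    ⟨σ.symm, ⟨fun i => - v.1 (σ.symm i), hv⟩, fun x i => sub_eq_add_neg _ _⟩, ?_, ?_⟩
  · intro x
    apply Subtype.ext
    funext i
    simp [hg]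
  · intro x
    apply Subtype.ext
    funext i
    simp [hg]

/-- Weak multi-pullbacks in `Enc`. -/
lemma exists_weak_pullback {n : ℕ} (hn : 1 ≤ n) {Es : Fin n → Enc} {K K' : Enc}
    (a : ∀ i, K ⟶ Es i) (a' : ∀ i, K' ⟶ Es i) :
    ∃ (H : Enc) (p : H ⟶ K) (p' : H ⟶ K'), (∀ i, p ≫ a i = p' ≫ a' i) ∧
      ∀ (V : Enc) (q : V ⟶ K) (q' : V ⟶ K'), (∀ i, q ≫ a i = q' ≫ a' i) →
        ∃ h : V ⟶ H, h ≫ p = q ∧ h ≫ p' = q' := by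
  choose A hA hAa using fun i => (a i).2
  choose A' hA' hAa' using fun i => (a' i).2
  obtain ⟨D, hD, hD1, hD2⟩ := exists_inv (hA' ⟨0, hn⟩)
  let B : Cartan → Cartan := fun x => D (A ⟨0, hn⟩ x)
  have hB : IsAffWeyl B := hD.comp (hA _)
  let X : Set Cartan := (K.carrier ∩ B ⁻¹' K'.carrier) ∩ {x | ∀ i, A i x = A' i (B x)}
  have hX : IsEnclosure X := by
    refine ⟨K.isEnclosure.1.subset fun x hx => hx.1.1, ?_⟩
    have hK : IsCell K.carrier := K.isEnclosure.2
    have hK' : IsCell K'.carrier := K'.isEnclosure.2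
    exact (hK.inter (hK'.preimage hB)).inter
      (isCell_forall _ fun i => isCell_eq (hA i) ((hA' i).comp hB))
  refine ⟨⟨X, hX⟩, ⟨fun x => ⟨x.1, x.2.1.1⟩, fun x => x, isAffWeyl_id, fun _ => rfl⟩,
    ⟨fun x => ⟨B x.1, x.2.1.2⟩, B, hB, fun _ => rfl⟩, ?_, ?_⟩
  · intro i
    apply Subtype.ext
    funext x
    apply Subtype.ext
    exact (hAa i ⟨x.1, x.2.1.1⟩).trans ((x.2.2 i).trans (hAa' i ⟨B x.1, x.2.1.2⟩).symm)
  · intro V q q' hq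
    have key : ∀ (i) (x : V.carrier), A i (q.1 x) = A' i (q'.1 x) := by
      intro i x
      rw [← hAa, ← hAa']
      exact congrArg Subtype.val (congrFun (congrArg Subtype.val (hq i)) x)
    have hBq : ∀ x : V.carrier, B (q.1 x) = q'.1 x := by
      intro x
      show D (A _ _) = _
      rw [key, hD1]
    refine ⟨⟨fun x => ⟨q.1 x, ⟨(q.1 x).2, ?_⟩, ?_⟩, ?_⟩, ?_, ?_⟩
    · rw [Set.mem_preimage]
      rw [hBq]
      exact (q'.1 x).2
    · intro i
      rw [hBq]
      exact key i x
    · obtain ⟨g, hg, e⟩ := q.2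
      exact ⟨g, hg, e⟩
    · rfl
    · apply Subtype.ext
      funext x
      apply Subtype.ext
      exact hBq x

lemma T_inj {J : GrothendieckTopology Enc}
    (hJ : ∀ (E : Enc) (S : Sieve E), S ∈ J.sieves E ↔ ContainsCovering E S)
    {U G : Enc} {g g' : U ⟶ G} (h : (T J).map g = (T J).map g') : g = g' := by
  obtain ⟨S, hS, hf⟩ := local_faithful J h
  obtain ⟨m, F, f, hfS, hc⟩ := (hJ U S).1 hS
  apply Subtype.ext
  funext x
  obtain ⟨i, y, rfl⟩ := hc x
  exact congrFun (congrArg Subtype.val (hf (f i) (hfS i))) y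

/-- Finitely many maps from `G̃` to representables become representable on a finite cover. -/
lemma exists_cover {J : GrothendieckTopology Enc}
    (hJ : ∀ (E : Enc) (S : Sieve E), S ∈ J.sieves E ↔ ContainsCovering E S)
    {n : ℕ} {Es : Fin n → Enc} {G : Enc}
    (α : ∀ i, (T J).obj G ⟶ (T J).obj (Es i)) :
    ∃ (m : ℕ) (F : Fin m → Enc) (f : ∀ k, F k ⟶ G) (a : ∀ k i, F k ⟶ Es i),
      Sieve.generate (Presieve.ofArrows F f) ∈ J G ∧
      ∀ k i, (T J).map (f k) ≫ α i = (T J).map (a k i) := by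
  choose S hS hSa using fun i => local_full J (α i) ⊤ (J.top_mem _)
  have hinf : ∀ t : Finset (Fin n), t.inf S ∈ J G := by
    intro t
    induction t using Finset.induction_on with
    | empty => simp
    | insert a s ha ih =>
      rw [Finset.inf_insert]
      exact J.intersection_covering (hS a) ih
  obtain ⟨m, F, f, hf, hc⟩ := (hJ G _).1 (hinf Finset.univ)
  have hf' : ∀ k i, (S i) (f k) := fun k i =>
    (Finset.inf_le (f := S) (Finset.mem_univ i)) _ (hf k)
  choose a ha using fun k i => hSa i (f k) (hf' k i)
  refine ⟨m, F, f, a, ?_, fun k i => (ha k i).2⟩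
  refine (hJ G _).2 ⟨m, F, f, fun k => ?_, hc⟩
  exact Sieve.le_generate _ _ _ (Presieve.ofArrows.mk k)

end EncAux

/-- Any subsheaf `𝔉` of a finite nonempty product of sheafified
representables `∏ᵢ Ẽᵢ` on the site `Enc` is finitely related. -/
theorem subsheaf_of_product_finRelated (J : GrothendieckTopology Enc)
    (hJ : ∀ (E : Enc) (S : Sieve E), S ∈ J.sieves E ↔ ContainsCovering E S)
    (n : ℕ) (hn : 1 ≤ n) (Es : Fin n → Enc)
    (𝔉 : Sheaf J (Type)) (ι : 𝔉 ⟶ ∏ᶜ fun i => tilde J (Es i)) (hι : Mono ι) :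
    FinRelated J 𝔉 := by
  intro G G' α α'
  let ρ : ∀ i, 𝔉 ⟶ (EncAux.T J).obj (Es i) :=
    fun i => ι ≫ Limits.Pi.π (fun i => tilde J (Es i)) i
  have hρ : ∀ {W : Sheaf J (Type)} (u v : W ⟶ 𝔉), (∀ i, u ≫ ρ i = v ≫ ρ i) → u = v := by
    intro W u v h
    rw [← cancel_mono ι]
    refine Limits.Pi.hom_ext _ _ fun i => ?_
    rw [Category.assoc, Category.assoc]
    exact h i
  change (EncAux.T J).obj G ⟶ 𝔉 at α
  change (EncAux.T J).obj G' ⟶ 𝔉 at α'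
  obtain ⟨m, F, f, a, hc, ha⟩ := EncAux.exists_cover hJ (fun i => α ≫ ρ i)
  obtain ⟨m', F', f', a', hc', ha'⟩ := EncAux.exists_cover hJ (fun i => α' ≫ ρ i)
  choose H p p' hp hH using fun (k : Fin m × Fin m') =>
    EncAux.exists_weak_pullback hn (a k.1) (a' k.2)
  let φ : ∀ k, (EncAux.T J).obj (H k) ⟶ Limits.pullback α α' := fun k =>
    Limits.pullback.lift ((EncAux.T J).map (p k ≫ f k.1)) ((EncAux.T J).map (p' k ≫ f' k.2)) (by
      apply hρ
      intro i
      simp only [Functor.map_comp, Category.assoc]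
      rw [ha, ha', ← Functor.map_comp, ← Functor.map_comp, hp])
  let e : Fin (m * m') ≃ Fin m × Fin m' := finProdFinEquiv.symm
  refine ⟨m * m', fun k => H (e k), fun k => φ (e k), ?_⟩
  refine EncAux.epi_of_local J (E := fun k => H (e k)) (fun k => φ (e k)) ?_
  intro U s
  obtain ⟨S, hS, hs⟩ := EncAux.local_full J (s ≫ Limits.pullback.fst α α') _ hc
  obtain ⟨S', hS', hs'⟩ := EncAux.local_full J (s ≫ Limits.pullback.snd α α') _ hc'
  refine ⟨S ⊓ S', J.intersection_covering hS hS', ?_⟩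
  rintro V t ⟨ht, ht'⟩
  obtain ⟨g, ⟨_, q, _, ⟨k⟩, rfl⟩, hg⟩ := hs t ht
  obtain ⟨g', ⟨_, q', _, ⟨l⟩, rfl⟩, hg'⟩ := hs' t ht'
  obtain ⟨h, h1, h2⟩ := hH (k, l) V q q' (by
    intro i
    apply EncAux.T_inj hJ
    rw [Functor.map_comp, Functor.map_comp, ← ha, ← ha']
    have e1 : (EncAux.T J).map q ≫ (EncAux.T J).map (f k) ≫ α ≫ ρ i
        = (EncAux.T J).map t ≫ s ≫ Limits.pullback.fst α α' ≫ α ≫ ρ i := by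
      rw [← Functor.map_comp_assoc, ← hg]
      simp only [Category.assoc]
    have e2 : (EncAux.T J).map q' ≫ (EncAux.T J).map (f' l) ≫ α' ≫ ρ i
        = (EncAux.T J).map t ≫ s ≫ Limits.pullback.snd α α' ≫ α' ≫ ρ i := by
      rw [← Functor.map_comp_assoc, ← hg']
      simp only [Category.assoc]
    refine e1.trans (Eq.trans ?_ e2.symm)
    rw [Limits.pullback.condition_assoc])
  refine ⟨e.symm (k, l), h ≫ eqToHom (by rw [Equiv.apply_symm_apply]), ?_⟩
  have hφ : (EncAux.T J).map t ≫ s = (EncAux.T J).map h ≫ φ (k, l) := by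
    apply Limits.pullback.hom_ext
    · rw [Category.assoc, hg, Category.assoc, Limits.pullback.lift_fst, ← Functor.map_comp,
        ← Category.assoc, h1]
    · rw [Category.assoc, hg', Category.assoc, Limits.pullback.lift_snd, ← Functor.map_comp,
        ← Category.assoc, h2]
  rw [hφ]
  have hgen : ∀ (x y : Fin m × Fin m') (hxy : x = y) (h : V ⟶ H x),
      (EncAux.T J).map h ≫ φ x = (EncAux.T J).map (h ≫ eqToHom (by rw [hxy])) ≫ φ y := by
    rintro x _ rfl h
    simp
  exact hgen _ _ (by simp) h
end

section
/- Let Γ be a spherical pre-building of type A₂, i.e. a connected bipartite graph (every edge joining a positive node to a negative node) with no cycles of length ≤ 4 in which every node lies on at least one edge. Suppose in addition that any two nodes of the same parity are at graph distance ≤ 2, and that every node lies on at least two distinct edges. Then any two nodes of Γ are at graph distance ≤ 3 and every pair of nodes is contained in a cycle of length 6; that is, Γ is a spherical building of type A₂. (This is the graph-theoretic content of the lemma that a construction satisfying SPB-loc, Ex-Obt and Ex-Side satisfies SB-loc: Ex-Obt gives that any two nodes of the same parity in each local spherical construction are at distance ≤ 2, and Ex-Side gives that every node lies on at least two distinct edges.)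 -/
/-- Let `Γ` be a spherical pre-building of type A₂: a connected
bipartite graph (every edge joins a positive node to a negative node, recorded by the
parity function `sign`), with no cycles of length ≤ 4, in which every node lies on at
least one edge.  If in addition any two nodes of the same parity are at graph distance
≤ 2 and every node lies on at least two distinct edges, then any two nodes are at graph
distance ≤ 3 and every pair of nodes is contained in a cycle of length 6; i.e. `Γ` is a
spherical building of type A₂. -/
theorem sphericalPreBuilding_isBuilding {Vtx : Type} (G : SimpleGraph Vtx)
    (sign : Vtx → Bool)
    (hbip : ∀ v w, G.Adj v w → sign v ≠ sign w)
    (hconn : G.Connected)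
    (hedge : ∀ v, ∃ w, G.Adj v w)
    (hgirth : ∀ (v : Vtx) (c : G.Walk v v), c.IsCycle → 4 < c.length)
    (hsame : ∀ v w, sign v = sign w → G.dist v w ≤ 2)
    (htwo : ∀ v, ∃ w w', w ≠ w' ∧ G.Adj v w ∧ G.Adj v w') :
    (∀ v w, G.dist v w ≤ 3) ∧
      ∀ v w, ∃ (u : Vtx) (c : G.Walk u u), c.IsCycle ∧ c.length = 6 ∧
        v ∈ c.support ∧ w ∈ c.support := by
  classical
  have hB : ∀ x y z : Bool, x ≠ y → z ≠ y → x = z := by decide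
  have hC : ∀ v w, sign v = sign w → v ≠ w → ∃ m, G.Adj v m ∧ G.Adj m w := by
    intro v w hs hne
    obtain ⟨p, hp⟩ := hconn.exists_walk_length_eq_dist v w
    have h2 := hsame v w hs
    rw [← hp] at h2
    match p, h2 with
    | .nil, _ => exact absurd rfl hne
    | .cons h .nil, _ => exact absurd hs (hbip _ _ h)
    | .cons h (.cons h' .nil), _ => exact ⟨_, h, h'⟩
    | .cons _ (.cons _ (.cons _ q)), h2 =>
      simp only [SimpleGraph.Walk.length_cons] at h2
      omega
  have hU : ∀ a b c d, G.Adj a b → G.Adj b c → G.Adj c d → G.Adj d a → a ≠ c → b ≠ d →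
      False := by
    intro a b c d h1 h2 h3 h4 hac hbd
    have := hgirth a (.cons h1 (.cons h2 (.cons h3 (.cons h4 .nil)))) (by
      have := h1.ne
      have := h2.ne
      have := h3.ne
      have := h4.ne
      rw [SimpleGraph.Walk.cons_isCycle_iff]
      simp [SimpleGraph.Walk.isPath_def]
      grind)
    simp at this
  have hO : ∀ v x, ∃ w, G.Adj v w ∧ w ≠ x := by
    intro v x
    obtain ⟨w, w', hne, h, h'⟩ := htwo v
    by_cases hx : w = x
    · exact ⟨w', h', fun h => hne (hx.trans h.symm)⟩
    · exact ⟨w, h, hx⟩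
  have hP : ∀ v w, ∃ b c d, G.Adj v b ∧ G.Adj b c ∧ G.Adj c d ∧ v ≠ c ∧ b ≠ d ∧
      (w = v ∨ w = b ∨ w = c ∨ w = d) := by
    intro v w
    by_cases hvw : w = v
    · obtain ⟨b, hb⟩ := hedge v
      obtain ⟨c, hc, hc'⟩ := hO b v
      obtain ⟨d, hd, hd'⟩ := hO c b
      exact ⟨b, c, d, hb, hc, hd, hc'.symm, hd'.symm, Or.inl hvw⟩
    by_cases ha : G.Adj v w
    · obtain ⟨c, hc, hc'⟩ := hO w v
      obtain ⟨d, hd, hd'⟩ := hO c w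
      exact ⟨w, c, d, ha, hc, hd, hc'.symm, hd'.symm, by simp⟩
    by_cases hs : sign v = sign w
    · obtain ⟨m, h1, h2⟩ := hC v w hs (Ne.symm hvw)
      obtain ⟨d, hd, hd'⟩ := hO w m
      exact ⟨m, w, d, h1, h2, hd, Ne.symm hvw, hd'.symm, by simp⟩
    · obtain ⟨m, hm⟩ := hedge w
      have hmv : v ≠ m := by
        rintro rfl
        exact ha hm.symm
      have hsm : sign v = sign m := hB _ _ _ hs (hbip _ _ hm).symm
      obtain ⟨b, h1, h2⟩ := hC v m hsm hmv
      refine ⟨b, m, w, h1, h2, hm.symm, hmv, ?_, by simp⟩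
      rintro rfl
      exact ha h1
  constructor
  · intro v w
    obtain ⟨b, c, d, h1, h2, h3, -, -, rfl | rfl | rfl | rfl⟩ := hP v w
    · simp
    · exact (SimpleGraph.dist_le (.cons h1 .nil)).trans (by simp)
    · exact (SimpleGraph.dist_le (.cons h1 (.cons h2 .nil))).trans (by simp)
    · exact (SimpleGraph.dist_le (.cons h1 (.cons h2 (.cons h3 .nil)))).trans (by simp)
  · intro v w
    obtain ⟨b, c, d, h1, h2, h3, hvc, hbd, hw⟩ := hP v w
    obtain ⟨e, h4, hec⟩ := hO d c
    have hvd : ¬ G.Adj d v := fun h => hU v b c d h1 h2 h3 h hvc hbd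
    have hev : e ≠ v := by
      rintro rfl
      exact hvd h4
    have s1 := hbip _ _ h1
    have s2 := hbip _ _ h2
    have s3 := hbip _ _ h3
    have s4 := hbip _ _ h4
    have hs : sign e = sign v := (hB _ _ _ s4.symm s3).trans (hB _ _ _ s2.symm s1)
    obtain ⟨f, h5, h6⟩ := hC e v hs hev
    have hfb : f ≠ b := by
      rintro rfl
      exact hU f c d e h2 h3 h4 h5 hbd hec.symm
    have hfd : f ≠ d := by
      rintro rfl
      exact hvd h6
    have s5 := hbip _ _ h5
    have s6 := hbip _ _ h6
    refine ⟨v, .cons h1 (.cons h2 (.cons h3 (.cons h4 (.cons h5 (.cons h6 .nil))))), ?_, rfl,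
      by simp, ?_⟩
    · have hvb : v ≠ b := h1.ne
      have hbc : b ≠ c := h2.ne
      have hcd : c ≠ d := h3.ne
      have hde : d ≠ e := h4.ne
      have hef : e ≠ f := h5.ne
      have hfv : f ≠ v := h6.ne
      have hscv : sign c = sign v := hB _ _ _ s2.symm s1
      clear hC hU hO hP hsame htwo hgirth hbip hedge hB hw
      have hvd' : v ≠ d := by grind
      have hbe : b ≠ e := by grind
      have hcf : c ≠ f := by grind
      rw [SimpleGraph.Walk.cons_isCycle_iff]
      simp [SimpleGraph.Walk.isPath_def]
      grind
    · simp
      tauto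
end
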